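/- Pour-El's Theorem (strengthened): Let U be a consistent c.e. theory and ℱ a function from sets of sentences to sets of sentences. If U is effectively if-essentially ℱ-incomplete, then U is effectively ℱ(U)-inseparable; moreover, the witnessing function Ψ can be chosen total computable, with Ψ(i, j) ∈ ℱ(U) and Ψ(i, j) ∉ W_i ∪ W_j whenever W_i and W_j weakly biseparate U_p and U_r. -/

import Mathlib

open FirstOrder FirstOrder.Language

namespace PourEl

/-! ## Recursion-theoretic notions -/

/-- The `i`-th computably enumerable subset of `ℕ` (the domain of the `i`-th
partial computable function). -/
def WSet (i : ℕ) : Set ℕ :=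
  {n | ((Denumerable.ofNat Nat.Partrec.Code i).eval n).Dom}

/-- A set of natural numbers is computably enumerable. -/
def CE (A : Set ℕ) : Prop := ∃ i, A = WSet i

/-- A set of natural numbers is computable. -/
def Comp (A : Set ℕ) : Prop := ComputablePred (· ∈ A)

/-- Disjoint sets `X`, `Y` are computably separable iff some computable set
contains `X` and is disjoint from `Y`. -/
def CompSeparable (X Y : Set ℕ) : Prop :=
  ∃ Z : Set ℕ, Comp Z ∧ X ⊆ Z ∧ Y ∩ Z = ∅

/-- Computable inseparability. -/
def CompInseparable (X Y : Set ℕ) : Prop := ¬ CompSeparable X Y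

/-- `Z` and `W` weakly biseparate `X` and `Y`. -/
def WeaklyBiseparate {α : Type*} (Z W X Y : Set α) : Prop :=
  X ⊆ Z ∧ Y ⊆ W ∧ Z ∩ Y = ∅ ∧ W ∩ X = ∅

/-- `Z` and `W` biseparate `X` and `Y`. -/
def Biseparate {α : Type*} (Z W X Y : Set α) : Prop :=
  WeaklyBiseparate Z W X Y ∧ Z ∩ W = ∅

/-! ## Logical notions -/

variable {L : FirstOrder.Language}

/-- Provability: `φ` is a first-order consequence of `U` (by Gödel completeness,
semantic consequence). -/
def Prv (U : L.Theory) (φ : L.Sentence) : Prop := U ⊨ᵇ φ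

/-- `U_p`: the set of theorems of `U`. -/
def Thms (U : L.Theory) : Set L.Sentence := {φ | Prv U φ}

/-- `U_r`: the set of refutable sentences of `U`. -/
def Refut (U : L.Theory) : Set L.Sentence := {φ | Prv U ∼φ}

/-- Consistency: `U ⊬ ⊥`. -/
def Consistent (U : L.Theory) : Prop := ¬ Prv U ⊥

/-- `φ` is independent of `U`: `U` proves neither `φ` nor `¬φ`. -/
def Independent (U : L.Theory) (φ : L.Sentence) : Prop := ¬ Prv U φ ∧ ¬ Prv U ∼φ

/-- `U` is incomplete: some sentence is independent of it. -/
def Incomplete (U : L.Theory) : Prop := ∃ φ, Independent U φ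

/-- Mono-consequence: `U ⊢_m φ` iff `ψ ⊢ φ` for some `ψ ∈ U`. -/
def MPrv (U : L.Theory) (φ : L.Sentence) : Prop := ∃ ψ ∈ U, Prv {ψ} φ

/-- `U_m`: the set of mono-theorems of `U`. -/
def MThms (U : L.Theory) : Set L.Sentence := {φ | MPrv U φ}

/-- `U_n`: the set of mono-refutable sentences of `U`. -/
def MRefut (U : L.Theory) : Set L.Sentence := {φ | MPrv U ∼φ}

/-- Mono-consistency: every member is consistent by itself. -/
def MonoConsistent (U : L.Theory) : Prop := ∀ ψ ∈ U, Consistent ({ψ} : L.Theory)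

/-- `Û`: the set of all non-empty finite conjunctions of elements of `U`. -/
def hat (U : L.Theory) : L.Theory :=
  {φ | ∃ (ψ : L.Sentence) (l : List L.Sentence),
    ψ ∈ U ∧ (∀ χ ∈ l, χ ∈ U) ∧ φ = l.foldl (· ⊓ ·) ψ}

/-- `U ⋓ V`. -/
def Cup (U V : L.Theory) : L.Theory :=
  {χ | ∃ φ ∈ U, ∃ ψ ∈ V, χ = φ ⊓ ψ}

/-- `U ⋐ V`: for every `φ ∈ U` and `ψ ∈ V` there is `ρ ∈ V` with `ρ ⊢ φ ∧ ψ`. -/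
def Ssub (U V : L.Theory) : Prop :=
  ∀ φ ∈ U, ∀ ψ ∈ V, ∃ ρ ∈ V, Prv {ρ} (φ ⊓ ψ)

/-! ## Gödel numbering -/

/-- A Gödel numbering of the sentences of a (countable) signature: a bijective
coding of sentences by natural numbers that is effective for the basic syntactic
operations, and for which the theorems of a c.e. theory can be effectively
enumerated from an index of the theory. -/
structure Numbering (L : FirstOrder.Language) where
  equiv : L.Sentence ≃ ℕ
  neg_comp : Computable fun n => equiv ∼(equiv.symm n)
  inf_comp : Computable₂ fun m n => equiv (equiv.symm m ⊓ equiv.symm n)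
  imp_comp : Computable₂ fun m n => equiv (equiv.symm m ⟹ equiv.symm n)
  iff_comp : Computable₂ fun m n => equiv (equiv.symm m ⇔ equiv.symm n)
  thmIdx : ℕ → ℕ
  thmIdx_comp : Computable thmIdx
  thmIdx_spec : ∀ i, WSet (thmIdx i) = equiv '' Thms (equiv.symm '' WSet i)

namespace Numbering

variable (g : Numbering L)

/-- The code of a sentence. -/
def code (φ : L.Sentence) : ℕ := g.equiv φ

/-- The set of codes of a set of sentences. -/
def codes (S : Set L.Sentence) : Set ℕ := g.equiv '' S

/-- The theory axiomatised by the `i`-th c.e. set (identified with a set of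
sentences via the numbering). -/
def thy (i : ℕ) : L.Theory := g.equiv.symm '' WSet i

/-- The theory `U` is computably enumerable (with respect to the numbering). -/
def CEThy (U : L.Theory) : Prop := CE (g.codes U)

end Numbering



/-- `U` is effectively `X`-inseparable: a partial computable function uniformly
produces, from any pair of c.e. sets weakly biseparating `U_p` and `U_r`, a
sentence in `X` lying outside both. -/
def EffXInseparable (g : Numbering L) (U : L.Theory) (X : Set L.Sentence) : Prop :=
  ∃ Φ : ℕ → ℕ →. ℕ, Partrec₂ Φ ∧ ∀ i j,
    WeaklyBiseparate (WSet i) (WSet j) (g.codes (Thms U)) (g.codes (Refut U)) →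
    ∃ n ∈ Φ i j, n ∈ g.codes X ∧ n ∉ WSet i ∪ WSet j

/-- `Φ` witnesses that `U` is effectively if-essentially `F`-incomplete: whenever
`W i` is a consistent finite extension of `U` (as a set of axioms), `Φ i`
converges to (the code of) a sentence in `F (W i)` independent of `W i`. -/
def IfEssWitness (g : Numbering L) (U : L.Theory)
    (F : Set L.Sentence → Set L.Sentence) (Φ : ℕ →. ℕ) : Prop :=
  ∀ i, (∃ Γ : Finset L.Sentence, g.thy i = U ∪ (Γ : Set L.Sentence)) →
    Consistent (g.thy i) →
    ∃ n ∈ Φ i, ∃ φ : L.Sentence, g.code φ = n ∧ φ ∈ F (g.thy i) ∧ Independent (g.thy i) φ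

/-- `U` is effectively if-essentially `F`-incomplete. -/
def EffIfEssIncomplete (g : Numbering L) (U : L.Theory)
    (F : Set L.Sentence → Set L.Sentence) : Prop :=
  ∃ Φ : ℕ →. ℕ, Partrec Φ ∧ IfEssWitness g U F Φ

/-!
Given `i` and `j`, the recursion theorem yields a theory `V` that can refer to its own index `e`:
it axiomatises `U` and, once the supposed independent sentence `φ = Φ(e)` shows up in `W_i` or in
`W_j`, adds `φ` if it was seen in `W_i` first and `∼φ` if it was seen in `W_j` first. If `W_i`
misses `U_r` and `W_j` misses `U_p`, then `V` is a consistent finite extension of `U`, so `φ`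
exists and is independent of `V`. Hence no literal was added: `φ ∉ W_i ∪ W_j`, `V = U`, and
`φ ∈ F U`. For totality, run `Φ(e)` in parallel with a search for an element of `W_i ∩ U_r` or of
`W_j ∩ U_p`.
-/

open Nat.Partrec (Code)
open Nat.Partrec.Code Encodable Denumerable

section Recursion

variable {α β σ : Type*} [Primcodable α] [Primcodable β] [Primcodable σ]

theorem rePred_comp {p : β → Prop} (hp : REPred p) {f : α → β} (hf : Computable f) :
    REPred fun a => p (f a) :=
  Partrec.comp hp hf

theorem rePred_and {p q : α → Prop} (hp : REPred p) (hq : REPred q) :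
    REPred fun a => p a ∧ q a :=
  (Partrec.bind hp (Partrec.comp hq Computable.fst).to₂).dom_re.of_eq fun a => by
    simp [Part.assert]

theorem rePred_or {p q : α → Prop} (hp : REPred p) (hq : REPred q) :
    REPred fun a => p a ∨ q a := by
  obtain ⟨f, hf, hfpq⟩ := Partrec.merge' hp hq
  exact hf.dom_re.of_eq fun a => by simp [(hfpq a).2, Part.assert]

theorem rePred_exists {p : α × β → Prop} (hp : REPred p) : REPred fun a => ∃ b, p (a, b) := by
  obtain ⟨c, hc⟩ := exists_code.1 hp
  have dom_iff (x : α × β) : p x ↔ ∃ k y, y ∈ evaln k c (encode x) := by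
    rw [exists_comm]
    simp only [← evaln_complete, ← Part.dom_iff_mem, hc]
    simp [Part.assert]
  let search (a : α) (t : ℕ) : Option ℕ :=
    (decode (α := β) t.unpair.2).bind fun b => evaln t.unpair.1 c (encode (a, b))
  have hsearch : Computable₂ search := by
    have hunpair : Computable fun x : α × ℕ => x.2.unpair :=
      Computable.unpair.comp Computable.snd
    have hstage : Computable fun x : (α × ℕ) × β => x.1.2.unpair.1 :=
      Computable.fst.comp (hunpair.comp Computable.fst)
    have hinput : Computable fun x : (α × ℕ) × β => encode (x.1.1, x.2) :=
      Computable.encode.comp ((Computable.fst.comp Computable.fst).pair Computable.snd)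
    exact Computable.option_bind (Computable.decode.comp (Computable.snd.comp hunpair))
      (primrec_evaln.to_comp.comp ((hstage.pair (Computable.const c)).pair hinput)).to₂
  refine (Partrec.rfindOpt hsearch).dom_re.of_eq fun a => ?_
  simp only [Nat.rfindOpt_dom, dom_iff, search]
  constructor
  · rintro ⟨t, y, hy⟩
    obtain ⟨b, -, hb⟩ := Option.mem_bind_iff.1 hy
    exact ⟨b, _, y, hb⟩
  · rintro ⟨b, k, y, hy⟩
    exact ⟨Nat.pair k (encode b), y, by simpa using hy⟩

theorem rePred_eq : REPred fun x : σ × σ => x.1 = x.2 := by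
  classical
  have heq : ComputablePred fun x : σ × σ => x.1 = x.2 :=
    ⟨inferInstance, Primrec.eq.decide.to_comp⟩
  exact heq.to_re

theorem rePred_mem_of_partrec {f : α →. σ} (hf : Partrec f) :
    REPred fun x : α × σ => x.2 ∈ f x.1 := by
  have hcheck : Partrec₂ fun (x : α × σ) (y : σ) => Part.assert (y = x.2) fun _ => Part.some () :=
    (Partrec.comp rePred_eq (Computable.snd.pair (Computable.snd.comp Computable.fst))).to₂
  refine ((hf.comp Computable.fst).bind hcheck).dom_re.of_eq fun x => ?_
  simp [Part.dom_iff_mem, Part.assert]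

theorem exists_partrec_bool_of_rePred {p q : α → Prop} (hp : REPred p) (hq : REPred q) :
    ∃ v : α →. Bool, Partrec v ∧ (∀ a, (v a).Dom ↔ p a ∨ q a) ∧
      ∀ a, ∀ b ∈ v a, cond b (p a) (q a) := by
  obtain ⟨v, hv, hvpq⟩ := Partrec.merge'
    (Partrec.map hp (Computable.const true).to₂) (Partrec.map hq (Computable.const false).to₂)
  refine ⟨v, hv, fun a => by simp [(hvpq a).2, Part.assert], fun a b hb => ?_⟩
  rcases (hvpq a).1 b hb with h | h
  all_goals
    obtain ⟨_, hu, rfl⟩ := (Part.mem_map_iff _).1 h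
    exact (Part.mem_assert_iff.1 hu).1

theorem exists_computable_of_rePred_not [Inhabited σ] {f : α →. σ} (hf : Partrec f)
    {p : α → Prop} (hp : REPred fun a => ¬ p a) (hdom : ∀ a, p a → (f a).Dom) :
    ∃ t : α → σ, Computable t ∧ ∀ a, p a → t a ∈ f a := by
  obtain ⟨T, hT, hTf⟩ := Partrec.merge' hf (Partrec.map hp (Computable.const default).to₂)
  have hTdom (a : α) : (T a).Dom := by
    rw [(hTf a).2]
    by_cases ha : p a
    · exact Or.inl (hdom a ha)
    · exact Or.inr ⟨ha, trivial⟩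
  refine ⟨fun a => (T a).get (hTdom a), hT.of_eq fun a => by simp, fun a ha => ?_⟩
  rcases (hTf a).1 _ (Part.get_mem (hTdom a)) with h | h
  · exact h
  · exact absurd ha (Part.dom_iff_mem.2 ⟨_, h⟩).1

theorem rePred_mem_WSet : REPred fun x : ℕ × ℕ => x.2 ∈ WSet x.1 :=
  (eval_part.comp ((Computable.ofNat Code).comp Computable.fst) Computable.snd).dom_re

theorem rePred_mem_of_ce {A : Set ℕ} (hA : CE A) : REPred (· ∈ A) := by
  obtain ⟨i, rfl⟩ := hA
  exact rePred_comp rePred_mem_WSet ((Computable.const i).pair Computable.id)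

theorem rePred_not_disjoint_WSet {A : Set ℕ} (hA : REPred (· ∈ A)) :
    REPred fun i => ¬ Disjoint (WSet i) A :=
  (rePred_exists (rePred_and rePred_mem_WSet (rePred_comp hA Computable.snd))).of_eq fun i => by
    rw [Set.not_disjoint_iff]

/-- Kleene's recursion theorem with parameters, for c.e. sets: the definition of the set indexed
by `k a` may refer to `k a` itself. -/
theorem exists_computable_mem_WSet_iff {R : α × ℕ × ℕ → Prop} (hR : REPred R) :
    ∃ k : α → ℕ, Computable k ∧ ∀ a n, n ∈ WSet (k a) ↔ R (a, k a, n) := by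
  let idx (c : Code) (a : α) : ℕ := encode (curry c (encode a))
  have hidx : Computable₂ idx :=
    Computable.encode.comp
      (primrec₂_curry.to_comp.comp Computable.fst (Computable.encode.comp Computable.snd))
  have hRidx : REPred fun x : (Code × ℕ) × α × ℕ => R (x.2.1, idx x.1.1 x.2.1, x.2.2) :=
    have harg : Computable fun x : (Code × ℕ) × α × ℕ => x.2.1 :=
      Computable.fst.comp Computable.snd
    rePred_comp hR <| harg.pair <|
      (hidx.comp (Computable.fst.comp Computable.fst) harg).pair
        (Computable.snd.comp Computable.snd)
  have hbody : Partrec₂ fun (c : Code) (m : ℕ) =>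
      (decode (α := α × ℕ) m : Part (α × ℕ)).bind fun x =>
        (Part.assert (R (x.1, idx c x.1, x.2)) fun _ => Part.some ()).map fun _ => 0 :=
    (Computable.ofOption (Computable.decode.comp Computable.snd)).bind
      (Partrec.map hRidx (Computable.const 0).to₂).to₂
  obtain ⟨c, hc⟩ := fixed_point₂ hbody
  refine ⟨idx c, hidx.comp (Computable.const c) Computable.id, fun a n => ?_⟩
  have hpair : Nat.pair (encode a) n = encode (a, n) := by simp
  calc n ∈ WSet (idx c a) ↔ ((eval c) (encode (a, n))).Dom := by
        simp only [WSet, Set.mem_ofPred_eq, idx, ofNat_encode, eval_curry, hpair]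
    _ ↔ R (a, idx c a, n) := by simp [hc, Part.assert]

end Recursion

section Logic

variable {U : L.Theory} {φ ψ : L.Sentence} {b : Bool}

theorem prv_union_singleton_iff : Prv (U ∪ {φ}) ψ ↔ Prv U (φ ⟹ ψ) := by
  simp only [Prv, Theory.models_sentence_iff]
  constructor
  · intro h M hφ
    have : M ⊨ U ∪ {φ} := Theory.model_union_iff.2
      ⟨inferInstance, Theory.model_singleton_iff.2 hφ⟩
    exact h (Theory.ModelType.of (U ∪ {φ}) M)
  · intro h M
    have hM : M ⊨ U ∧ M ⊨ ({φ} : L.Theory) := Theory.model_union_iff.1 M.is_model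
    have := hM.1
    exact h (Theory.ModelType.of U M) (Theory.model_singleton_iff.1 hM.2)

theorem prv_not_not_iff : Prv U ∼∼φ ↔ Prv U φ := by
  simp only [Prv, Theory.models_sentence_iff, Sentence.realize_not, not_not]

/-- The sentence `φ` or its negation, according to the sign `b`. -/
def literal (b : Bool) (φ : L.Sentence) : L.Sentence := cond b φ ∼φ

theorem not_independent_of_literal_mem (h : literal b φ ∈ U) : ¬ Independent U φ := by
  rintro ⟨hφ, hnφ⟩
  cases b
  · exact hnφ (Theory.models_sentence_of_mem h)
  · exact hφ (Theory.models_sentence_of_mem h)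

theorem consistent_union_literal_iff :
    Consistent (U ∪ {literal b φ}) ↔ cond b (φ ∉ Refut U) (φ ∉ Thms U) := by
  cases b
  · exact not_congr (prv_union_singleton_iff.trans prv_not_not_iff)
  · exact not_congr prv_union_singleton_iff

end Logic

namespace Numbering

variable (g : Numbering L)

theorem mem_codes_iff {S : Set L.Sentence} {n : ℕ} :
    n ∈ g.codes S ↔ g.equiv.symm n ∈ S := by
  rw [codes, Equiv.image_eq_preimage_symm, Set.mem_preimage]

theorem mem_thy_iff {i : ℕ} {φ : L.Sentence} :
    φ ∈ g.thy i ↔ g.code φ ∈ WSet i := by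
  rw [thy, Equiv.image_symm_eq_preimage, Set.mem_preimage, code]

theorem computable_code_literal :
    Computable fun x : ℕ × Bool => g.code (literal x.2 (g.equiv.symm x.1)) :=
  (Computable.cond Computable.snd Computable.fst (g.neg_comp.comp Computable.fst)).of_eq
    fun ⟨n, b⟩ => by cases b <;> simp [code, literal]

variable {g}

theorem CEThy.ce_codes_thms {U : L.Theory} (hU : g.CEThy U) : CE (g.codes (Thms U)) := by
  obtain ⟨i, hi⟩ := hU
  refine ⟨g.thmIdx i, ?_⟩
  rw [g.thmIdx_spec, ← hi, codes, codes, Equiv.symm_image_image]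

theorem CEThy.rePred_mem_codes_refut {U : L.Theory} (hU : g.CEThy U) :
    REPred (· ∈ g.codes (Refut U)) :=
  (rePred_comp (rePred_mem_of_ce hU.ce_codes_thms) g.neg_comp).of_eq fun n => by
    simp [mem_codes_iff, Thms, Refut]

end Numbering

section Extensions

variable {g : Numbering L} {U : L.Theory} {F : Set L.Sentence → Set L.Sentence} {Φ : ℕ →. ℕ}

/-- The literals that `v` adds to a theory on account of the outputs in `P`: the sentence coded by
each `n ∈ P` is added if `v n = true`, its negation if `v n = false`, and nothing if `v n`
diverges. -/
def verdicts (g : Numbering L) (v : ℕ →. Bool) (P : Part ℕ) : Set L.Sentence :=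
  {ψ | ∃ n ∈ P, ∃ b ∈ v n, ψ = literal b (g.equiv.symm n)}

theorem verdicts_eq_empty {v : ℕ →. Bool} {P : Part ℕ}
    (h : ∀ n ∈ P, ¬ (v n).Dom) : verdicts g v P = ∅ :=
  Set.eq_empty_of_forall_notMem fun _ ⟨n, hn, _, hb, _⟩ => h n hn (Part.dom_iff_mem.2 ⟨_, hb⟩)

theorem verdicts_eq_singleton {v : ℕ →. Bool} {P : Part ℕ} {n : ℕ} {b : Bool} (hn : n ∈ P)
    (hb : b ∈ v n) : verdicts g v P = {literal b (g.equiv.symm n)} := by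
  ext ψ
  constructor
  · rintro ⟨n', hn', b', hb', rfl⟩
    rw [Part.mem_unique hn' hn] at hb' ⊢
    rw [Part.mem_unique hb' hb, Set.mem_singleton_iff]
  · rintro rfl
    exact ⟨n, hn, b, hb, rfl⟩

theorem exists_computable_thy_eq_union_verdicts {α : Type*} [Primcodable α]
    (hU : g.CEThy U) (hΦ : Partrec Φ) {v : α → ℕ →. Bool} (hv : Partrec₂ v) :
    ∃ k : α → ℕ, Computable k ∧ ∀ a, g.thy (k a) = U ∪ verdicts g (v a) (Φ (k a)) := by
  let lit (x : α × ℕ) : Part ℕ := (Φ x.2).bind fun n =>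
    (v x.1 n).map fun b => g.code (literal b (g.equiv.symm n))
  have hlit : Partrec lit := by
    have hv' : Partrec₂ fun (x : α × ℕ) n => v x.1 n :=
      hv.comp (Computable.fst.comp Computable.fst) Computable.snd
    exact (hΦ.comp Computable.snd).bind <| hv'.map <|
      (g.computable_code_literal.comp
        ((Computable.snd.comp Computable.fst).pair Computable.snd)).to₂
  have hR : REPred fun x : α × ℕ × ℕ => x.2.2 ∈ g.codes U ∨ x.2.2 ∈ lit (x.1, x.2.1) := by
    have helt : Computable fun x : α × ℕ × ℕ => x.2.2 := Computable.snd.comp Computable.snd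
    have hself : Computable fun x : α × ℕ × ℕ => (x.1, x.2.1) :=
      Computable.fst.pair (Computable.fst.comp Computable.snd)
    exact rePred_or (rePred_comp (rePred_mem_of_ce hU) helt)
      (rePred_comp (rePred_mem_of_partrec hlit) (hself.pair helt))
  obtain ⟨k, hk, hkR⟩ := exists_computable_mem_WSet_iff hR
  refine ⟨k, hk, fun a => Set.ext fun ψ => ?_⟩
  rw [g.mem_thy_iff, hkR]
  refine or_congr (by simp [g.mem_codes_iff, Numbering.code]) ?_
  simp [lit, verdicts, Part.mem_bind_iff, Part.mem_map_iff, Numbering.code, eq_comm]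

theorem IfEssWitness.exists_mem_codes_of_thy_eq_union_verdicts (hΦ : IfEssWitness g U F Φ)
    (hcon : Consistent U) {v : ℕ →. Bool}
    (hv : ∀ n, ∀ b ∈ v n, Consistent (U ∪ {literal b (g.equiv.symm n)}))
    {e : ℕ} (he : g.thy e = U ∪ verdicts g v (Φ e)) :
    ∃ n ∈ Φ e, n ∈ g.codes (F U) ∧ ¬ (v n).Dom := by
  have hsilent : ∀ n ∈ Φ e, ¬ (v n).Dom := by
    intro n hn hdom
    obtain ⟨b, hb⟩ := Part.dom_iff_mem.1 hdom
    rw [verdicts_eq_singleton hn hb] at he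
    obtain ⟨m, hm, φ, rfl, -, hind⟩ :=
      hΦ e ⟨{literal b (g.equiv.symm n)}, by rw [he, Finset.coe_singleton]⟩ (he ▸ hv n b hb)
    obtain rfl := Part.mem_unique hm hn
    refine not_independent_of_literal_mem (b := b) ?_ hind
    simp [he, Numbering.code]
  rw [verdicts_eq_empty hsilent, Set.union_empty] at he
  obtain ⟨n, hn, φ, hφ, hF, -⟩ := hΦ e ⟨∅, by simp [he]⟩ (he ▸ hcon)
  exact ⟨n, hn, ⟨φ, he ▸ hF, hφ⟩, hsilent n hn⟩

theorem EffIfEssIncomplete.exists_partrec_avoiding (h : EffIfEssIncomplete g U F)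
    (hU : g.CEThy U) (hcon : Consistent U) :
    ∃ Θ : ℕ × ℕ →. ℕ, Partrec Θ ∧ ∀ i j,
      Disjoint (WSet i) (g.codes (Refut U)) → Disjoint (WSet j) (g.codes (Thms U)) →
      ∃ n ∈ Θ (i, j), n ∈ g.codes (F U) ∧ n ∉ WSet i ∪ WSet j := by
  obtain ⟨Φ, hΦ, hwit⟩ := h
  have hmem {f : ℕ × ℕ → ℕ} (hf : Computable f) :
      REPred fun x : (ℕ × ℕ) × ℕ => x.2 ∈ WSet (f x.1) :=
    rePred_comp rePred_mem_WSet ((hf.comp Computable.fst).pair Computable.snd)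
  obtain ⟨v, hv, hdom, hsound⟩ :=
    exists_partrec_bool_of_rePred (hmem Computable.fst) (hmem Computable.snd)
  obtain ⟨k, hk, hthy⟩ :=
    exists_computable_thy_eq_union_verdicts hU hΦ (v := fun p n => v (p, n)) hv
  refine ⟨fun p => Φ (k p), hΦ.comp hk, fun i j hi hj => ?_⟩
  have hcon_verdict : ∀ n, ∀ b ∈ v ((i, j), n),
      Consistent (U ∪ {literal b (g.equiv.symm n)}) := by
    intro n b hb
    rw [consistent_union_literal_iff, ← g.mem_codes_iff, ← g.mem_codes_iff]
    have := hsound _ b hb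
    cases b
    · exact hj.notMem_of_mem_left this
    · exact hi.notMem_of_mem_left this
  obtain ⟨n, hn, hF, hnot⟩ :=
    hwit.exists_mem_codes_of_thy_eq_union_verdicts hcon hcon_verdict (hthy (i, j))
  exact ⟨n, hn, hF, fun hn' => hnot ((hdom _).2 hn')⟩

end Extensions

theorem statement8_general (g : Numbering L) (U : L.Theory)
    (hU : g.CEThy U) (hcon : Consistent U) (F : Set L.Sentence → Set L.Sentence)
    (h : EffIfEssIncomplete g U F) :
    ∃ Ψ : ℕ → ℕ → ℕ, Computable₂ Ψ ∧ ∀ i j,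
      Disjoint (WSet i) (g.codes (Refut U)) → Disjoint (WSet j) (g.codes (Thms U)) →
      Ψ i j ∈ g.codes (F U) ∧ Ψ i j ∉ WSet i ∪ WSet j := by
  obtain ⟨Θ, hΘ, hΘ_avoids⟩ := h.exists_partrec_avoiding hU hcon
  have hfail : REPred fun p : ℕ × ℕ => ¬ (Disjoint (WSet p.1) (g.codes (Refut U)) ∧
      Disjoint (WSet p.2) (g.codes (Thms U))) :=
    (rePred_or
      (rePred_comp (rePred_not_disjoint_WSet hU.rePred_mem_codes_refut) Computable.fst)
      (rePred_comp (rePred_not_disjoint_WSet (rePred_mem_of_ce hU.ce_codes_thms))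
        Computable.snd)).of_eq fun _ => not_and_or.symm
  obtain ⟨t, ht, ht_mem⟩ := exists_computable_of_rePred_not hΘ hfail fun p hp =>
    have ⟨n, hn, _⟩ := hΘ_avoids p.1 p.2 hp.1 hp.2
    Part.dom_iff_mem.2 ⟨n, hn⟩
  refine ⟨fun i j => t (i, j), ht, fun i j hi hj => ?_⟩
  obtain ⟨n, hn, havoid⟩ := hΘ_avoids i j hi hj
  simpa only [Part.mem_unique (ht_mem (i, j) ⟨hi, hj⟩) hn] using havoid

/-- **Pour-El's theorem, strengthened.** If the consistent c.e.
theory `U` is effectively if-essentially `F`-incomplete then `U` is effectively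
`F U`-inseparable; moreover the witnessing function can be chosen total. -/
theorem statement8 {L : FirstOrder.Language} (g : Numbering L) (U : L.Theory)
    (hU : g.CEThy U) (hcon : Consistent U)
    (F : Set L.Sentence → Set L.Sentence)
    (h : EffIfEssIncomplete g U F) :
    EffXInseparable g U (F U) ∧
      ∃ Ψ : ℕ → ℕ → ℕ, Computable₂ Ψ ∧ ∀ i j,
        WeaklyBiseparate (WSet i) (WSet j) (g.codes (Thms U)) (g.codes (Refut U)) →
        Ψ i j ∈ g.codes (F U) ∧ Ψ i j ∉ WSet i ∪ WSet j := by
  obtain ⟨Ψ, hΨ, havoid⟩ := statement8_general g U hU hcon F h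
  have hΨ_spec := fun i j (hs : WeaklyBiseparate (WSet i) (WSet j) _ _) =>
    havoid i j (Set.disjoint_iff_inter_eq_empty.2 hs.2.2.1)
      (Set.disjoint_iff_inter_eq_empty.2 hs.2.2.2)
  exact ⟨⟨fun i j => Part.some (Ψ i j), hΨ, fun i j hs => ⟨_, Part.mem_some _, hΨ_spec i j hs⟩⟩,
    Ψ, hΨ, hΨ_spec⟩

end PourEl
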